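/- If G is a ring graph, then the cut monoid M_G is normal, i.e., every x in gp(M_G) such that n·x ∈ M_G for some integer n ≥ 1 already satisfies x ∈ M_G. (Equivalently, the cut polytope of any ring graph is normal.) -/

import Mathlib

/-!
A sum of `m` cuts is the same thing as a map `f : V → Finset (Fin m)`, the sum having the value
`#(f v ∆ f w)` on an edge `vw` (`exists_of_mem_cutMonoid`, `mem_cutMonoid_of`), and an element of
`gp(M_G)` is modulo `2` a coboundary (`exists_parity`). So normality follows from `Nice`: if `N x`
is realised by subsets of `Fin (N α)` and `x` is a coboundary modulo `2`, then `x` is realised by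
subsets of `Fin α`.

Niceness is inherited by `0`-sums and `1`-sums: symmetric difference with a fixed set and
permutations of `Fin α` preserve all the values `#(f v ∆ f w)`. With the first, realisations on the
two pieces can be made to agree at one common vertex; with both, at the two ends of a common edge,
because there the two symmetric differences have the same size `x v w`.

On a tree only `0 ≤ x ≤ α` matters: an arbitrary set of size `x e` is chosen for each edge `e`, and
`f v` is the symmetric difference of these sets along the path from `v` to a root.

On a cycle `v₀, …, v_m` let `T k` be the size of `g v_k ∆ g v₀` in the given realisation of `N x`.
The sets `f v_k` are chosen successively, starting with `f v₀ = ∅`, so that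
`|N #(f v_k) - T k| ≤ N` (`exists_seq`). Each step is possible because the sizes of `f v_{k+1}` that
can be reached from `f v_k` form an interval of integers of one parity whose two ends are within
distance `1` of the interval which the triangle inequalities impose on `T (k+1) / N`
(`exists_round`, `exists_finset_step`). Since `T m = N x(v_m v₀)`, at the end `#(f v_m)` differs
from `x(v_m v₀)` by at most `1`; the two have the same parity, so they are equal.
-/

/-! Basic definitions for cut monoids of finite simple graphs. -/

open Classical in
/-- The cut vector of a vertex set `A`, as a function on `Sym2 V`:
value `1` on pairs with exactly one element in `A`, and `0` otherwise. -/
noncomputable def cutVec {V : Type} (A : Set V) : Sym2 V → ℤ :=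
  Sym2.lift ⟨fun v w => if ((v ∈ A) ↔ (w ∈ A)) then 0 else 1,
    fun v w => if_congr iff_comm rfl rfl⟩

variable {V : Type}

/-- The generators `(δ_A, 1)` of the cut monoid of `G`. -/
def cutGens (G : SimpleGraph V) : Set ((G.edgeSet → ℤ) × ℤ) :=
  {p | ∃ A : Set V, p = (fun e => cutVec A e.1, 1)}

/-- The cut monoid `M_G` of a graph `G`. -/
def cutMonoid (G : SimpleGraph V) : AddSubmonoid ((G.edgeSet → ℤ) × ℤ) :=
  AddSubmonoid.closure (cutGens G)

/-- The group `gp(M_G)` generated by the cut monoid. -/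
def cutGroup (G : SimpleGraph V) : AddSubgroup ((G.edgeSet → ℤ) × ℤ) :=
  AddSubgroup.closure (cutGens G)

/-- `M_G` is normal: every `x ∈ gp(M_G)` with `n • x ∈ M_G` for some `n ≥ 1` lies in `M_G`. -/
def CutNormal (G : SimpleGraph V) : Prop :=
  ∀ x ∈ cutGroup G, (∃ n : ℕ, 1 ≤ n ∧ n • x ∈ cutMonoid G) → x ∈ cutMonoid G

/-- `M_G` is seminormal: every `x ∈ gp(M_G)` with `2 • x ∈ M_G` and `3 • x ∈ M_G`
lies in `M_G`. -/
def CutSeminormal (G : SimpleGraph V) : Prop :=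
  ∀ x ∈ cutGroup G, 2 • x ∈ cutMonoid G → 3 • x ∈ cutMonoid G → x ∈ cutMonoid G

/-- Generators of the cone of `M_G`: nonnegative real multiples of the `(δ_A, 1)`. -/
noncomputable def cutConeGens (G : SimpleGraph V) : Set ((G.edgeSet → ℝ) × ℝ) :=
  {q | ∃ (c : ℝ) (A : Set V), 0 ≤ c ∧
    q = c • ((fun e => ((cutVec A e.1 : ℤ) : ℝ), (1 : ℝ)))}

/-- The cone `cone(M_G)`: all finite nonnegative real combinations of the `(δ_A, 1)`. -/
noncomputable def cutCone (G : SimpleGraph V) : Set ((G.edgeSet → ℝ) × ℝ) :=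
  (AddSubmonoid.closure (cutConeGens G) : Set ((G.edgeSet → ℝ) × ℝ))

/-- The canonical map from `ℤ^E × ℤ` to `ℝ^E × ℝ`. -/
noncomputable def toRealCut (G : SimpleGraph V) (p : (G.edgeSet → ℤ) × ℤ) :
    (G.edgeSet → ℝ) × ℝ :=
  (fun e => ((p.1 e : ℤ) : ℝ), ((p.2 : ℤ) : ℝ))

/-- `int(M_G)`: elements of `M_G` mapping into the topological interior of `cone(M_G)`. -/
noncomputable def cutInterior (G : SimpleGraph V) : Set ((G.edgeSet → ℤ) × ℤ) :=
  {p | p ∈ cutMonoid G ∧ toRealCut G p ∈ interior (cutCone G)}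

/-- The set of last coordinates `α ∈ ℕ` realized by elements of `int(M_G)`;
its least element is `m(G)`. -/
noncomputable def cutDegrees (G : SimpleGraph V) : Set ℕ :=
  {α | ∃ x : G.edgeSet → ℤ, ((x, (α : ℤ)) : (G.edgeSet → ℤ) × ℤ) ∈ cutInterior G}

/-- `H` is a minor of `G`: branch sets `B u` are nonempty, pairwise disjoint,
induce connected subgraphs, and edges of `H` are witnessed by edges of `G`. -/
def GraphMinor {W V : Type} (H : SimpleGraph W) (G : SimpleGraph V) : Prop :=
  ∃ B : W → Set V,
    (∀ u, (B u).Nonempty) ∧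
    (∀ u v, u ≠ v → Disjoint (B u) (B v)) ∧
    (∀ u, (G.induce (B u)).Connected) ∧
    (∀ u v, H.Adj u v → ∃ a ∈ B u, ∃ b ∈ B v, G.Adj a b)

/-- `G` is `K₅`-minor-free. -/
def K5Free (G : SimpleGraph V) : Prop :=
  ¬ GraphMinor (⊤ : SimpleGraph (Fin 5)) G

/-- `G` is bipartite: vertices split into two parts so every edge joins the parts. -/
def BipartiteG (G : SimpleGraph V) : Prop :=
  ∃ s : Set V, ∀ ⦃v w⦄, G.Adj v w → ((v ∈ s ∧ w ∉ s) ∨ (w ∈ s ∧ v ∉ s))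

/-- `G` has an induced cycle of length `n` (n ≥ 3): an induced-subgraph copy of the
cycle graph of length `n`. -/
def HasInducedCycleLen (G : SimpleGraph V) (n : ℕ) : Prop :=
  3 ≤ n ∧ Nonempty (SimpleGraph.cycleGraph n ↪g G)

/-- `G` contains a triangle. -/
def HasTriangle (G : SimpleGraph V) : Prop :=
  ∃ a b c, G.Adj a b ∧ G.Adj b c ∧ G.Adj a c

/-- `G` is chordal: every induced cycle is a triangle. -/
def ChordalG (G : SimpleGraph V) : Prop :=
  ∀ n, HasInducedCycleLen G n → n = 3

/-- `G` is bridgeless: every edge lies on some cycle. -/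
def BridgelessG (G : SimpleGraph V) : Prop :=
  ∀ e ∈ G.edgeSet, ∃ (v : V) (c : G.Walk v v), c.IsCycle ∧ e ∈ c.edges

/-- `G` is (isomorphic to) a cycle of length `n`. -/
def IsCycleOfLen (G : SimpleGraph V) (n : ℕ) : Prop :=
  3 ≤ n ∧ Nonempty (G ≃g SimpleGraph.cycleGraph n)

/-- `G` is a cycle. -/
def IsCycleGraph (G : SimpleGraph V) : Prop :=
  ∃ n, IsCycleOfLen G n

/-- `G` is a `0`-sum of `G1` and `G2`: copies of `G1`, `G2` cover `G`,
overlap in exactly one vertex, and every edge comes from `G1` or `G2`. -/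
def IsZeroSumDecomp {V1 V2 : Type} (G : SimpleGraph V) (G1 : SimpleGraph V1)
    (G2 : SimpleGraph V2) : Prop :=
  ∃ (f1 : V1 ↪ V) (f2 : V2 ↪ V),
    Set.range f1 ∪ Set.range f2 = Set.univ ∧
    (∃ v, Set.range f1 ∩ Set.range f2 = {v}) ∧
    (∀ a b, G.Adj a b ↔
      ((∃ x y, f1 x = a ∧ f1 y = b ∧ G1.Adj x y) ∨
       (∃ x y, f2 x = a ∧ f2 y = b ∧ G2.Adj x y)))

/-- `G` is a `1`-sum of `G1` and `G2` along a common edge. -/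
def IsOneSumDecomp {V1 V2 : Type} (G : SimpleGraph V) (G1 : SimpleGraph V1)
    (G2 : SimpleGraph V2) : Prop :=
  ∃ (f1 : V1 ↪ V) (f2 : V2 ↪ V) (v w : V),
    v ≠ w ∧
    Set.range f1 ∪ Set.range f2 = Set.univ ∧
    Set.range f1 ∩ Set.range f2 = {v, w} ∧
    (∃ x y, f1 x = v ∧ f1 y = w ∧ G1.Adj x y) ∧
    (∃ x y, f2 x = v ∧ f2 y = w ∧ G2.Adj x y) ∧
    (∀ a b, G.Adj a b ↔
      ((∃ x y, f1 x = a ∧ f1 y = b ∧ G1.Adj x y) ∨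
       (∃ x y, f2 x = a ∧ f2 y = b ∧ G2.Adj x y)))

/-- Ring graphs: obtained, up to adding isolated vertices, from finitely many
(finite) trees and cycles by iterated `0`-sums and `1`-sums. -/
inductive IsRingGraph : {V : Type} → SimpleGraph V → Prop
  | tree {V : Type} (G : SimpleGraph V) :
      Finite V → G.Connected → G.IsAcyclic → IsRingGraph G
  | cycle {V : Type} (G : SimpleGraph V) : IsCycleGraph G → IsRingGraph G
  | zeroSum {V1 V2 V : Type} {G1 : SimpleGraph V1} {G2 : SimpleGraph V2}
      {G : SimpleGraph V} :
      IsRingGraph G1 → IsRingGraph G2 → IsZeroSumDecomp G G1 G2 → IsRingGraph G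
  | oneSum {V1 V2 V : Type} {G1 : SimpleGraph V1} {G2 : SimpleGraph V2}
      {G : SimpleGraph V} :
      IsRingGraph G1 → IsRingGraph G2 → IsOneSumDecomp G G1 G2 → IsRingGraph G
  | addIsolated {V W : Type} {G : SimpleGraph V} {H : SimpleGraph W} (f : V ↪ W) :
      IsRingGraph G → (∀ a b, H.Adj a b ↔ ∃ x y, f x = a ∧ f y = b ∧ G.Adj x y) →
      IsRingGraph H

/-- An edge of an induced subgraph is an edge of the ambient graph. -/
lemma induce_edge_mem (G : SimpleGraph V) (s : Set V) (e : Sym2 s)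
    (he : e ∈ (G.induce s).edgeSet) : e.map Subtype.val ∈ G.edgeSet := by
  induction e using Sym2.ind with
  | _ a b =>
    rw [Sym2.map_pair_eq, SimpleGraph.mem_edgeSet]
    exact he

/-- Restriction of a vector indexed by the edges of `G` to the edges of the
subgraph of `G` induced on `s`. -/
noncomputable def restrictCut (G : SimpleGraph V) (s : Set V) (p : G.edgeSet → ℤ) :
    (G.induce s).edgeSet → ℤ :=
  fun e => p ⟨e.1.map Subtype.val, induce_edge_mem G s e.1 e.2⟩

open Finset in
/-- A graph is *nice* if hypercube embeddings up to scale `N` can be scaled down.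
A family of `m` cuts is encoded as a map `f : V → Finset (Fin m)`, where `i ∈ f v` says that `v`
lies in the `i`-th vertex set; the sum of the cuts then has the value `#(f v ∆ f w)` on `vw`.
The hypotheses say that `N • (x, α)` is a sum of `N * α` cuts, and that `x` is congruent modulo
`2` to a coboundary, which holds for every element of `gp(M_G)`. -/
def Nice {V : Type} (G : SimpleGraph V) : Prop :=
  ∀ (α N : ℕ) (x : V → V → ℤ) (c : V → ℤ) (g : V → Finset (Fin (N * α))), 1 ≤ N →
    (∀ v w, G.Adj v w → N * x v w = #(symmDiff (g v) (g w))) →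
    (∀ v w, G.Adj v w → (2 : ℤ) ∣ x v w - c v - c w) →
    ∃ f : V → Finset (Fin α), ∀ v w, G.Adj v w → x v w = #(symmDiff (f v) (f w))

/-! ### Cuts as hypercube embeddings -/

lemma cutVec_mk {V : Type} (A : Set V) (v w : V) [Decidable (v ∈ A ↔ w ∈ A)] :
    cutVec A s(v, w) = if (v ∈ A ↔ w ∈ A) then 0 else 1 := by
  unfold cutVec
  simp only [Sym2.lift_mk]
  congr

lemma sum_gens_apply {V : Type} (G : SimpleGraph V) {m : ℕ} (A : Fin m → Set V) :
    (∑ i, ((fun e => cutVec (A i) e.1, 1) : (G.edgeSet → ℤ) × ℤ)) =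
      (fun e => ∑ i, cutVec (A i) e.1, (m : ℤ)) := by
  ext1
  · rw [Prod.fst_sum]
    ext e
    simp
  · rw [Prod.snd_sum]
    simp

open Classical in
lemma sum_cutVec {V : Type} {m : ℕ} (A : Fin m → Set V) (v w : V) :
    ∑ i, cutVec (A i) s(v, w) = ((symmDiff (Finset.univ.filter fun i => v ∈ A i)
      (Finset.univ.filter fun i => w ∈ A i)).card : ℤ) := by
  rw [show symmDiff (Finset.univ.filter fun i => v ∈ A i)
      (Finset.univ.filter fun i => w ∈ A i) = Finset.univ.filter fun i => ¬ (v ∈ A i ↔ w ∈ A i) by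
    ext i; simp only [Finset.mem_symmDiff, Finset.mem_filter, Finset.mem_univ, true_and]; tauto]
  rw [Finset.card_filter]
  push_cast
  refine Finset.sum_congr rfl fun i _ => ?_
  rw [cutVec_mk]
  split_ifs <;> simp_all

lemma exists_of_mem_cutMonoid {V : Type} {G : SimpleGraph V} {p : (G.edgeSet → ℤ) × ℤ}
    (hp : p ∈ cutMonoid G) : ∃ m : ℕ, p.2 = m ∧ ∃ f : V → Finset (Fin m),
      ∀ v w (h : G.Adj v w), p.1 ⟨s(v, w), h⟩ = (symmDiff (f v) (f w)).card := by
  classical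
  obtain ⟨l, hl, rfl⟩ := AddSubmonoid.exists_list_of_mem_closure hp
  have h : ∀ i : Fin l.length, ∃ A : Set V, l[i] = (fun e => cutVec A e.1, 1) :=
    fun i => hl _ (List.getElem_mem _)
  choose A hA using h
  have key : l.sum = (fun e => ∑ i, cutVec (A i) e.1, (l.length : ℤ)) := by
    rw [← sum_gens_apply, ← Fin.sum_univ_getElem]
    exact Finset.sum_congr rfl fun i _ => hA i
  refine ⟨l.length, by rw [key], fun v => Finset.univ.filter fun i => v ∈ A i, fun v w h => ?_⟩
  rw [key, ← sum_cutVec]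

lemma mem_cutMonoid_of {V : Type} {G : SimpleGraph V} {p : (G.edgeSet → ℤ) × ℤ} {m : ℕ}
    (hm : p.2 = m) (f : V → Finset (Fin m))
    (hf : ∀ v w (h : G.Adj v w), p.1 ⟨s(v, w), h⟩ = (symmDiff (f v) (f w)).card) :
    p ∈ cutMonoid G := by
  classical
  have key : p = ∑ i, ((fun e => cutVec {v | i ∈ f v} e.1, 1) : (G.edgeSet → ℤ) × ℤ) := by
    rw [sum_gens_apply]
    ext1
    · ext ⟨e, he⟩
      induction e using Sym2.ind with
      | _ v w =>
        refine (hf v w he).trans ((sum_cutVec (fun i => {v | i ∈ f v}) v w).trans ?_).symm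
        simp
    · exact hm
  rw [key]
  exact AddSubmonoid.sum_mem _ fun i _ => AddSubmonoid.subset_closure ⟨_, rfl⟩

lemma exists_parity {V : Type} {G : SimpleGraph V} {p : (G.edgeSet → ℤ) × ℤ}
    (hp : p ∈ cutGroup G) :
    ∃ c : V → ℤ, ∀ v w (h : G.Adj v w), (2 : ℤ) ∣ p.1 ⟨s(v, w), h⟩ - c v - c w := by
  classical
  induction hp using AddSubgroup.closure_induction with
  | mem p hp =>
    obtain ⟨A, rfl⟩ := hp
    refine ⟨fun v => if v ∈ A then 1 else 0, fun v w h => ?_⟩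
    simp only [cutVec_mk]
    by_cases hv : v ∈ A <;> by_cases hw : w ∈ A <;> simp [hv, hw]
  | zero => exact ⟨0, by simp⟩
  | add p q _ _ hp hq =>
    obtain ⟨c, hc⟩ := hp
    obtain ⟨d, hd⟩ := hq
    refine ⟨c + d, fun v w h => ?_⟩
    have h1 := hc v w h
    have h2 := hd v w h
    simp only [Prod.fst_add, Pi.add_apply]
    omega
  | neg p _ hp =>
    obtain ⟨c, hc⟩ := hp
    refine ⟨-c, fun v w h => ?_⟩
    have h1 := hc v w h
    simp only [Prod.fst_neg, Pi.neg_apply]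
    omega

lemma Nice.cutNormal {V : Type} {G : SimpleGraph V} (hG : Nice G) : CutNormal G := by
  classical
  rintro p hp ⟨N, hN, hNp⟩
  obtain ⟨c, hc⟩ := exists_parity hp
  obtain ⟨m, hm, g, hg⟩ := exists_of_mem_cutMonoid hNp
  simp only [Prod.smul_snd, Prod.smul_fst, Pi.smul_apply] at hm hg
  simp only [nsmul_eq_mul] at hm hg
  have h0 : 0 ≤ p.2 := by
    have : (0 : ℤ) < N := by exact_mod_cast hN
    by_contra! h
    nlinarith
  obtain ⟨α, hα⟩ := Int.eq_ofNat_of_zero_le h0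
  obtain rfl : m = N * α := by rw [hα] at hm; exact_mod_cast hm.symm
  obtain ⟨f, hf⟩ := hG α N (fun v w => if h : G.Adj v w then p.1 ⟨s(v, w), h⟩ else 0) c g hN
    (fun v w h => by simpa [h] using hg v w h) (fun v w h => by simpa [h] using hc v w h)
  exact mem_cutMonoid_of hα f fun v w h => by simpa [h] using hf v w h

/-! ### Gluing -/

lemma Nice.of_iso_isolated {V W : Type} {G : SimpleGraph V} {H : SimpleGraph W} (f : V ↪ W)
    (hG : Nice G) (hH : ∀ a b, H.Adj a b ↔ ∃ x y, f x = a ∧ f y = b ∧ G.Adj x y) : Nice H := by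
  intro α N x c g hN hg hc
  have hadj : ∀ v w, G.Adj v w → H.Adj (f v) (f w) := fun v w h => (hH _ _).2 ⟨v, w, rfl, rfl, h⟩
  obtain ⟨h1, hh1⟩ := hG α N (fun v w => x (f v) (f w)) (c ∘ f) (g ∘ f) hN
    (fun v w h => hg _ _ (hadj v w h)) (fun v w h => hc _ _ (hadj v w h))
  refine ⟨Function.extend f h1 fun _ => ∅, fun a b h => ?_⟩
  obtain ⟨v, w, rfl, rfl, hvw⟩ := (hH _ _).1 h
  rw [f.injective.extend_apply, f.injective.extend_apply]
  exact hh1 v w hvw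

lemma exists_glue {V1 V2 V β : Type} (f1 : V1 ↪ V) (f2 : V2 ↪ V)
    (h1 : V1 → β) (h2 : V2 → β) (d : β) (h : ∀ a b, f1 a = f2 b → h1 a = h2 b) :
    ∃ k : V → β, (∀ a, k (f1 a) = h1 a) ∧ ∀ b, k (f2 b) = h2 b := by
  refine ⟨Function.extend f1 h1 (Function.extend f2 h2 fun _ => d),
    fun a => f1.injective.extend_apply _ _ _, fun b => ?_⟩
  by_cases hb : ∃ a, f1 a = f2 b
  · obtain ⟨a, ha⟩ := hb
    rw [← ha, f1.injective.extend_apply, h a b ha]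
  · rw [Function.extend_apply' _ _ _ hb, f2.injective.extend_apply]

/-- Niceness passes to a union of two graphs as soon as the embeddings of the pieces can be moved,
without changing symmetric differences, so as to agree on the common vertices. -/
lemma nice_of_glue {V1 V2 V : Type} {G1 : SimpleGraph V1} {G2 : SimpleGraph V2}
    {G : SimpleGraph V} (hG1 : Nice G1) (hG2 : Nice G2) (f1 : V1 ↪ V) (f2 : V2 ↪ V)
    (hG : ∀ a b, G.Adj a b ↔
      ((∃ x y, f1 x = a ∧ f1 y = b ∧ G1.Adj x y) ∨
       (∃ x y, f2 x = a ∧ f2 y = b ∧ G2.Adj x y)))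
    (H : ∀ (α : ℕ) (x : V → V → ℤ) (h1 : V1 → Finset (Fin α)) (h2 : V2 → Finset (Fin α)),
      (∀ v w, G1.Adj v w → x (f1 v) (f1 w) = (symmDiff (h1 v) (h1 w)).card) →
      (∀ v w, G2.Adj v w → x (f2 v) (f2 w) = (symmDiff (h2 v) (h2 w)).card) →
      ∃ (k1 : V1 → Finset (Fin α)) (k2 : V2 → Finset (Fin α)),
        (∀ v w, (symmDiff (k1 v) (k1 w)).card = (symmDiff (h1 v) (h1 w)).card) ∧
        (∀ v w, (symmDiff (k2 v) (k2 w)).card = (symmDiff (h2 v) (h2 w)).card) ∧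
        ∀ a b, f1 a = f2 b → k1 a = k2 b) : Nice G := by
  intro α N x c g hN hg hc
  have hadj1 : ∀ v w, G1.Adj v w → G.Adj (f1 v) (f1 w) :=
    fun v w h => (hG _ _).2 (Or.inl ⟨v, w, rfl, rfl, h⟩)
  have hadj2 : ∀ v w, G2.Adj v w → G.Adj (f2 v) (f2 w) :=
    fun v w h => (hG _ _).2 (Or.inr ⟨v, w, rfl, rfl, h⟩)
  obtain ⟨h1, hh1⟩ := hG1 α N (fun v w => x (f1 v) (f1 w)) (c ∘ f1) (g ∘ f1) hN
    (fun v w h => hg _ _ (hadj1 v w h)) (fun v w h => hc _ _ (hadj1 v w h))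
  obtain ⟨h2, hh2⟩ := hG2 α N (fun v w => x (f2 v) (f2 w)) (c ∘ f2) (g ∘ f2) hN
    (fun v w h => hg _ _ (hadj2 v w h)) (fun v w h => hc _ _ (hadj2 v w h))
  obtain ⟨k1, k2, hk1, hk2, hk⟩ := H α x h1 h2 hh1 hh2
  obtain ⟨k, e1, e2⟩ := exists_glue f1 f2 k1 k2 ∅ hk
  refine ⟨k, fun a b h => ?_⟩
  obtain ⟨v, w, rfl, rfl, hvw⟩ | ⟨v, w, rfl, rfl, hvw⟩ := (hG _ _).1 h
  · rw [e1, e1, hk1]; exact hh1 v w hvw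
  · rw [e2, e2, hk2]; exact hh2 v w hvw

lemma symmDiff_symmDiff_right_cancel {β : Type} [DecidableEq β] (a b c : Finset β) :
    symmDiff (symmDiff a c) (symmDiff b c) = symmDiff a b := by
  ext i
  simp only [Finset.mem_symmDiff]
  tauto

lemma Nice.zeroSum {V1 V2 V : Type} {G1 : SimpleGraph V1} {G2 : SimpleGraph V2}
    {G : SimpleGraph V} (hG1 : Nice G1) (hG2 : Nice G2) (h : IsZeroSumDecomp G G1 G2) :
    Nice G := by
  obtain ⟨f1, f2, -, ⟨v, hv⟩, hG⟩ := h
  refine nice_of_glue hG1 hG2 f1 f2 hG fun α x h1 h2 _ _ => ?_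
  obtain ⟨⟨a0, ha0⟩, ⟨b0, hb0⟩⟩ : v ∈ Set.range f1 ∩ Set.range f2 := by rw [hv]; rfl
  refine ⟨fun a => symmDiff (h1 a) (h1 a0), fun b => symmDiff (h2 b) (h2 b0), fun v w => ?_,
    fun v w => ?_, fun a b hab => ?_⟩
  · rw [symmDiff_symmDiff_right_cancel]
  · rw [symmDiff_symmDiff_right_cancel]
  · have : f1 a = v := by
      have : f1 a ∈ Set.range f1 ∩ Set.range f2 := ⟨⟨a, rfl⟩, ⟨b, hab.symm⟩⟩
      rwa [hv] at this
    obtain rfl : a = a0 := f1.injective (this.trans ha0.symm)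
    obtain rfl : b = b0 := f2.injective (hab.symm.trans (this.trans hb0.symm))
    simp

lemma exists_perm_map_eq {β : Type} [Fintype β] [DecidableEq β] {s t : Finset β}
    (h : s.card = t.card) : ∃ σ : Equiv.Perm β, s.map σ.toEmbedding = t := by
  let e : {x // x ∈ s} ≃ {x // x ∈ t} := Finset.equivOfCardEq h
  refine ⟨e.extendSubtype, Finset.eq_of_subset_of_card_le ?_ ?_⟩
  · intro i hi
    obtain ⟨j, hj, rfl⟩ := Finset.mem_map.1 hi
    exact e.extendSubtype_mem j hj
  · rw [Finset.card_map, h]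

lemma card_symmDiff_map {β : Type} [DecidableEq β] (σ : Equiv.Perm β) (s t : Finset β) :
    (symmDiff (s.map σ.toEmbedding) (t.map σ.toEmbedding)).card = (symmDiff s t).card := by
  rw [← Finset.card_map σ.toEmbedding (s := symmDiff s t)]
  congr 1
  ext i
  simp [Finset.mem_symmDiff]

lemma Nice.oneSum {V1 V2 V : Type} {G1 : SimpleGraph V1} {G2 : SimpleGraph V2}
    {G : SimpleGraph V} (hG1 : Nice G1) (hG2 : Nice G2) (h : IsOneSumDecomp G G1 G2) :
    Nice G := by
  obtain ⟨f1, f2, v, w, -, -, hvw, ⟨a0, a1, ha0, ha1, ha⟩, ⟨b0, b1, hb0, hb1, hb⟩, hG⟩ := h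
  refine nice_of_glue hG1 hG2 f1 f2 hG fun α x h1 h2 e1 e2 => ?_
  have hcard : (symmDiff (h2 b1) (h2 b0)).card = (symmDiff (h1 a1) (h1 a0)).card := by
    have E1 := e1 _ _ ha.symm
    have E2 := e2 _ _ hb.symm
    rw [ha0, ha1] at E1
    rw [hb0, hb1] at E2
    exact_mod_cast E2.symm.trans E1
  obtain ⟨σ, hσ⟩ := exists_perm_map_eq hcard
  refine ⟨fun a => symmDiff (h1 a) (h1 a0),
    fun b => (symmDiff (h2 b) (h2 b0)).map σ.toEmbedding, fun v w => ?_,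
    fun v w => ?_, fun a b hab => ?_⟩
  · rw [symmDiff_symmDiff_right_cancel]
  · rw [card_symmDiff_map, symmDiff_symmDiff_right_cancel]
  · have : f1 a ∈ Set.range f1 ∩ Set.range f2 := ⟨⟨a, rfl⟩, ⟨b, hab.symm⟩⟩
    rw [hvw] at this
    obtain this | this : f1 a = v ∨ f1 a = w := this
    · obtain rfl : a = a0 := f1.injective (this.trans ha0.symm)
      obtain rfl : b = b0 := f2.injective (hab.symm.trans (this.trans hb0.symm))
      simp
    · obtain rfl : a = a1 := f1.injective (this.trans ha1.symm)
      obtain rfl : b = b1 := f2.injective (hab.symm.trans (this.trans hb1.symm))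
      exact hσ.symm

/-! ### Trees -/

/-- The symmetric difference of the labels `I u v` along the edges of a walk. -/
def walkSum {V β : Type} [DecidableEq β] {G : SimpleGraph V} (I : V → V → Finset β) :
    {u v : V} → G.Walk u v → Finset β
  | _, _, .nil => ∅
  | _, _, .cons (u := u) (v := v) _ p => symmDiff (I u v) (walkSum I p)

/-- In an acyclic graph, for adjacent `v` and `w`, one of the two paths to a root extends the
other by the edge `vw`. -/
lemma path_cases {V : Type} {G : SimpleGraph V} (hG : G.IsAcyclic) {v w r : V} (h : G.Adj v w)
    (p : G.Path v r) (q : G.Path w r) :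
    (q : G.Walk w r) = .cons h.symm p ∨ (p : G.Walk v r) = .cons h q := by
  classical
  have huniq : ∀ {a b : V} (p q : G.Path a b), p = q := fun {a b} =>
    (hG.subsingleton_path a b).elim
  by_cases hw : w ∈ (p : G.Walk v r).support
  · right
    have h1 := huniq ⟨_, p.2.takeUntil hw⟩ (SimpleGraph.Path.singleton h)
    have h2 := huniq ⟨_, p.2.dropUntil hw⟩ q
    have h3 := (p : G.Walk v r).take_spec hw
    rw [← h3]
    rw [Subtype.ext_iff] at h1 h2
    simp only [SimpleGraph.Path.singleton] at h1 h2
    rw [h1, h2]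
    rfl
  · left
    exact congrArg Subtype.val (huniq q ⟨.cons h.symm p, p.2.cons hw⟩)

lemma nice_tree {V : Type} {G : SimpleGraph V} (hc : G.Connected) (ha : G.IsAcyclic) :
    Nice G := by
  classical
  intro α N x c g hN hg _
  have hN0 : (0 : ℤ) < N := by exact_mod_cast hN
  obtain ⟨r⟩ := hc.nonempty
  have hp : ∀ v, ∃ p : G.Path v r, True := fun v => ⟨(hc v r).some.toPath, trivial⟩
  choose p _ using hp
  -- Any subset of `Fin α` with `x v w` elements can serve as the label of the edge `vw`.
  let I : V → V → Finset (Fin α) := fun v w => Finset.univ.filter fun i => (i.val : ℤ) < x v w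
  have hI : ∀ v w, G.Adj v w → ((I v w).card : ℤ) = x v w := by
    intro v w h
    have h1 := hg v w h
    have h2 : (symmDiff (g v) (g w)).card ≤ N * α := by
      simpa using Finset.card_le_univ (symmDiff (g v) (g w))
    have h3 : (N : ℤ) * x v w ≤ N * α := by rw [h1]; exact_mod_cast h2
    have h4 : x v w ≤ α := le_of_mul_le_mul_left h3 hN0
    have h5 : 0 ≤ x v w := by
      by_contra! hneg
      nlinarith [Int.natCast_nonneg (symmDiff (g v) (g w)).card]
    obtain ⟨k, hk⟩ := Int.eq_ofNat_of_zero_le h5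
    simp only [I, hk, Nat.cast_lt]
    rw [Fin.card_filter_val_lt]
    congr 1
    omega
  refine ⟨fun v => walkSum I (p v : G.Walk v r), fun v w h => ?_⟩
  have hsymm : x w v = x v w := by
    have h1 := hg v w h
    rw [symmDiff_comm, ← hg w v h.symm] at h1
    exact (mul_left_cancel₀ hN0.ne' h1).symm
  obtain h1 | h1 := path_cases ha h (p v) (p w)
  · simp only [h1, walkSum]
    rw [symmDiff_comm, symmDiff_symmDiff_cancel_right, hI w v h.symm, hsymm]
  · simp only [h1, walkSum]
    rw [symmDiff_symmDiff_cancel_right, hI v w h]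

/-! ### Cycles -/

lemma card_symmDiff_add {β : Type} [DecidableEq β] (s t : Finset β) :
    (symmDiff s t).card + 2 * (s ∩ t).card = s.card + t.card := by
  have h1 := Finset.card_sdiff_add_card_inter s t
  have h2 := Finset.card_sdiff_add_card_inter t s
  rw [Finset.inter_comm t s] at h2
  have h3 : (symmDiff s t).card = (s \ t).card + (t \ s).card :=
    Finset.card_union_of_disjoint disjoint_sdiff_sdiff
  omega

/-- The numerical step: `r` is within `1` of `T / N`, and `T'` satisfies the triangle inequalities
with `T` and `N x`. Then some `r'` of the parity of `r + x` satisfies the triangle inequalities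
with `r` and `x` and is within `1` of `T' / N`. -/
lemma exists_round {N r x α T T' : ℤ} (hN : 1 ≤ N) (hr0 : 0 ≤ r) (hr : r ≤ α) (hx0 : 0 ≤ x)
    (hx : x ≤ α) (hT : |N * r - T| ≤ N) (h1 : T ≤ T' + N * x) (h2 : T' ≤ T + N * x)
    (h3 : N * x ≤ T + T') (h4 : T + T' + N * x ≤ 2 * (N * α)) :
    ∃ r' : ℤ, 2 ∣ r' - r - x ∧ r - x ≤ r' ∧ x - r ≤ r' ∧ r' ≤ r + x ∧ r' ≤ 2 * α - r - x ∧
      |N * r' - T'| ≤ N := by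
  obtain ⟨hTl, hTu⟩ := abs_le.1 hT
  obtain ⟨lo, hlo1, hlo2, hlo3⟩ : ∃ lo, r - x ≤ lo ∧ x - r ≤ lo ∧ (lo = r - x ∨ lo = x - r) :=
    ⟨max (r - x) (x - r), le_max_left _ _, le_max_right _ _, max_choice _ _⟩
  obtain ⟨hi, hhi1, hhi2, hhi3⟩ :
      ∃ hi, hi ≤ r + x ∧ hi ≤ 2 * α - r - x ∧ (hi = r + x ∨ hi = 2 * α - r - x) :=
    ⟨min (r + x) (2 * α - r - x), min_le_left _ _, min_le_right _ _, min_choice _ _⟩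
  have hlohi : lo ≤ hi := by omega
  have hloT : N * lo - N ≤ T' := by
    rcases hlo3 with rfl | rfl <;> nlinarith
  have hhiT : T' ≤ N * hi + N := by
    rcases hhi3 with rfl | rfl <;> nlinarith
  by_cases c1 : T' ≤ N * lo
  · refine ⟨lo, by omega, by omega, by omega, by omega, by omega, ?_⟩
    rw [abs_le]; constructor <;> linarith
  by_cases c2 : N * hi ≤ T'
  · refine ⟨hi, by omega, by omega, by omega, by omega, by omega, ?_⟩
    rw [abs_le]; constructor <;> linarith
  -- Otherwise `T' / N` is rounded to the nearest integer in `lo + 2ℤ`.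
  push Not at c1 c2
  set j := (T' - N * lo + N) / (2 * N) with hj
  have hj1 : 2 * N * j ≤ T' - N * lo + N := Int.mul_ediv_self_le (by omega)
  have hj2 : T' - N * lo + N < 2 * N * j + 2 * N := Int.lt_mul_ediv_self_add (by omega)
  have hj0 : 0 ≤ j := Int.ediv_nonneg (by linarith) (by linarith)
  have hle : lo + 2 * j ≤ hi := by
    by_contra! hlt
    have : N * (hi + 1) ≤ N * (lo + 2 * j) := mul_le_mul_of_nonneg_left hlt (by linarith)
    nlinarith
  refine ⟨lo + 2 * j, by omega, by omega, by omega, by omega, by omega, ?_⟩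
  rw [abs_le]; constructor <;> nlinarith

/-- The sizes allowed by `exists_round` are attained: `S'` arises from `S` by removing
`(#S + x - r') / 2` elements and adding `(x + r' - #S) / 2` new ones. -/
lemma exists_finset_step {α : ℕ} (S : Finset (Fin α)) {x r' : ℤ} (h0 : 2 ∣ r' - S.card - x)
    (h1 : S.card - x ≤ r') (h2 : x - S.card ≤ r') (h3 : r' ≤ S.card + x)
    (h4 : r' ≤ 2 * α - S.card - x) :
    ∃ S' : Finset (Fin α), (S'.card : ℤ) = r' ∧ x = (symmDiff S S').card := by
  have hSc : (Sᶜ).card + S.card = α := by simp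
  obtain ⟨i, hi⟩ := Int.eq_ofNat_of_zero_le (a := ((S.card : ℤ) + x - r') / 2) (by omega)
  obtain ⟨j, hj⟩ := Int.eq_ofNat_of_zero_le (a := (x + r' - (S.card : ℤ)) / 2) (by omega)
  obtain ⟨I, hIS, hI⟩ := Finset.exists_subset_card_eq (s := S) (n := i) (by omega)
  obtain ⟨J, hJS, hJ⟩ := Finset.exists_subset_card_eq (s := Sᶜ) (n := j) (by omega)
  have hSJ : Disjoint S J :=
    (Finset.disjoint_left).2 fun a ha hb => Finset.mem_compl.1 (hJS hb) ha
  refine ⟨(S \ I) ∪ J, ?_, ?_⟩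
  · rw [Finset.card_union_of_disjoint (hSJ.mono_left Finset.sdiff_subset)]
    have := Finset.card_sdiff_add_card_eq_card hIS
    push_cast
    omega
  · have : symmDiff S ((S \ I) ∪ J) = I ∪ J := by
      ext a
      have h1 : a ∈ I → a ∈ S := fun h => hIS h
      have h2 : a ∈ J → a ∉ S := fun h => Finset.mem_compl.1 (hJS h)
      simp only [Finset.mem_symmDiff, Finset.mem_union, Finset.mem_sdiff]
      tauto
    rw [this, Finset.card_union_of_disjoint (hSJ.mono_left hIS)]
    push_cast
    omega

/-- A path of cuts scaled down: the distance to the starting vertex, which need not be divisible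
by `N`, is preserved up to an error of `1` after scaling. -/
lemma exists_seq {α N : ℕ} (hN : 1 ≤ N) (X : ℕ → ℤ) (g : ℕ → Finset (Fin (N * α))) (m : ℕ)
    (hg : ∀ k < m, N * X k = (symmDiff (g k) (g (k + 1))).card) :
    ∃ F : ℕ → Finset (Fin α), F 0 = ∅ ∧ (∀ k < m, X k = (symmDiff (F k) (F (k + 1))).card) ∧
      ∀ k ≤ m, |(N : ℤ) * (F k).card - (symmDiff (g k) (g 0)).card| ≤ N := by
  have hN0 : (0 : ℤ) < N := by exact_mod_cast hN
  induction m with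
  | zero =>
    refine ⟨fun _ => ∅, rfl, by simp, fun k hk => ?_⟩
    obtain rfl : k = 0 := by omega
    simp
  | succ m ih =>
    obtain ⟨F, hF0, hF1, hF2⟩ := ih fun k hk => hg k (by omega)
    have hX := hg m (by omega)
    -- The triangle inequalities between the three scaled distances.
    set P := symmDiff (g m) (g 0) with hP
    set Q := symmDiff (g (m + 1)) (g 0) with hQ
    have e1 : symmDiff (g m) (g (m + 1)) = symmDiff P Q :=
      (symmDiff_symmDiff_right_cancel _ _ _).symm
    rw [e1] at hX
    have e2 := card_symmDiff_add P Q
    have e3 := Finset.card_union_add_card_inter P Q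
    have e4 : (P ∪ Q).card ≤ N * α := by simpa using Finset.card_le_univ (P ∪ Q)
    have e5 : (symmDiff P Q).card ≤ N * α := by simpa using Finset.card_le_univ (symmDiff P Q)
    have e6 := Finset.card_le_card (Finset.inter_subset_left (s₁ := P) (s₂ := Q))
    have e7 := Finset.card_le_card (Finset.inter_subset_right (s₁ := P) (s₂ := Q))
    have hFα : (F m).card ≤ α := by simpa using Finset.card_le_univ (F m)
    have hx0 : 0 ≤ X m := by
      by_contra! hneg
      nlinarith [Int.natCast_nonneg (symmDiff P Q).card]
    have hxα : X m ≤ α := by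
      refine le_of_mul_le_mul_left (a := (N : ℤ)) ?_ hN0
      rw [hX]; exact_mod_cast e5
    zify at e2 e3 e4 e6 e7
    obtain ⟨r', p1, p2, p3, p4, p5, p6⟩ := exists_round (N := N) (r := (F m).card) (x := X m)
      (α := α) (T := P.card) (T' := Q.card) (by omega) (by omega) (by omega) hx0 hxα
      (hF2 m le_rfl) (by linarith) (by linarith) (by linarith) (by linarith)
    obtain ⟨S, hS1, hS2⟩ := exists_finset_step (F m) p1 p2 p3 p4 p5
    refine ⟨fun k => if k ≤ m then F k else S, by simp [hF0], fun k hk => ?_, fun k hk => ?_⟩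
    · by_cases hkm : k < m
      · simpa [hkm.le, hkm] using hF1 k hkm
      · obtain rfl : k = m := by omega
        simpa using hS2
    · by_cases hkm : k ≤ m
      · simpa [hkm] using hF2 k hkm
      · obtain rfl : k = m + 1 := by omega
        simpa [hS1] using p6

lemma nice_cycleGraph {n : ℕ} (hn : 3 ≤ n) : Nice (SimpleGraph.cycleGraph n) := by
  intro α N x c g hN hg hc
  have hN0 : (0 : ℤ) < N := by exact_mod_cast hN
  obtain ⟨m, rfl⟩ : ∃ m, n = m + 1 := ⟨n - 1, by omega⟩
  have hadj : ∀ k (h : k < m), (SimpleGraph.cycleGraph (m + 1)).Adj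
      ⟨k, by omega⟩ ⟨k + 1, by omega⟩ := by
    intro k h
    rw [SimpleGraph.cycleGraph_adj']
    right
    rw [Fin.sub_val_of_le (by simp)]
    simp
  have hlast : (SimpleGraph.cycleGraph (m + 1)).Adj ⟨m, by omega⟩ ⟨0, by omega⟩ := by
    rw [SimpleGraph.cycleGraph_adj']
    right
    rw [Fin.coe_sub_iff_lt.mpr (by rw [Fin.lt_def]; simp; omega)]
    simp
  have hsymm : ∀ v w, (SimpleGraph.cycleGraph (m + 1)).Adj v w → x v w = x w v := by
    intro v w h
    have h1 := hg v w h
    rw [symmDiff_comm, ← hg w v h.symm] at h1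
    exact mul_left_cancel₀ hN0.ne' h1
  -- Vertices are indexed by `ℕ`; only the values up to `m` matter.
  let ι : ℕ → Fin (m + 1) := Fin.ofNat (m + 1)
  have hι : ∀ k (h : k < m + 1), ι k = ⟨k, h⟩ := fun k h => Fin.ext (Nat.mod_eq_of_lt h)
  have hι1 : ∀ k < m, (SimpleGraph.cycleGraph (m + 1)).Adj (ι k) (ι (k + 1)) := by
    intro k h
    rw [hι k (by omega), hι (k + 1) (by omega)]
    exact hadj k h
  have hι2 : (SimpleGraph.cycleGraph (m + 1)).Adj (ι m) (ι 0) := by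
    rw [hι m (by omega), hι 0 (by omega)]
    exact hlast
  obtain ⟨F, hF0, hF1, hF2⟩ := exists_seq hN (fun k => x (ι k) (ι (k + 1))) (fun k => g (ι k)) m
    fun k hk => hg _ _ (hι1 k hk)
  have hpar : ∀ k ≤ m, (2 : ℤ) ∣ (F k).card - c (ι k) - c (ι 0) := by
    intro k
    induction k with
    | zero => intro _; rw [hF0]; simp only [Finset.card_empty]; omega
    | succ k ih =>
      intro hk
      have h1 := ih (by omega)
      have h2 := hc _ _ (hι1 k (by omega))
      have h3 := hF1 k (by omega)
      have h4 := card_symmDiff_add (F k) (F (k + 1))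
      omega
  -- On the closing edge the error is less than `2` and even, hence zero.
  have hclose : x (ι m) (ι 0) = (F m).card := by
    have h1 := hF2 m le_rfl
    have h2 := hpar m le_rfl
    have h3 := hc _ _ hι2
    rw [← hg _ _ hι2, ← mul_sub, abs_mul, abs_of_pos hN0] at h1
    have h4 : |((F m).card : ℤ) - x (ι m) (ι 0)| ≤ 1 := by
      refine le_of_mul_le_mul_left (a := (N : ℤ)) ?_ hN0
      simpa using h1
    rw [abs_le] at h4
    omega
  have hord : ∀ a b : Fin (m + 1), a.val ≤ b.val → (SimpleGraph.cycleGraph (m + 1)).Adj a b →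
      x a b = (symmDiff (F a.val) (F b.val)).card := by
    intro a b hab h
    have ha : ι a.val = a := hι _ a.2
    have hb : ι b.val = b := hι _ b.2
    rw [SimpleGraph.cycleGraph_adj'] at h
    have hne : a.val ≠ b.val := by
      intro he
      obtain rfl : a = b := Fin.ext he
      simp at h
    have hcase : b.val = a.val + 1 ∨ (a.val = 0 ∧ b.val = m) := by
      rcases h with h | h
      · rw [Fin.coe_sub_iff_lt.mpr (by rw [Fin.lt_def]; omega)] at h
        omega
      · rw [Fin.sub_val_of_le (by rw [Fin.le_def]; exact hab)] at h
        omega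
    rcases hcase with h1 | ⟨h1, h2⟩
    · have := hF1 a.val (by omega)
      simp only [← h1, ha, hb] at this
      exact this
    · rw [h1, h2, hF0, ← ha, ← hb, h1, h2, hsymm _ _ hι2.symm, hclose, ← Finset.bot_eq_empty, bot_symmDiff]
  refine ⟨fun v => F v.val, fun a b h => ?_⟩
  rcases le_total a.val b.val with hab | hab
  · exact hord a b hab h
  · rw [hsymm a b h, hord b a hab h.symm, symmDiff_comm]

lemma IsRingGraph.nice {V : Type} {G : SimpleGraph V} (h : IsRingGraph G) : Nice G := by
  induction h with
  | tree G _ hc ha => exact nice_tree hc ha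
  | cycle G h =>
    obtain ⟨n, hn, ⟨φ⟩⟩ := h
    refine Nice.of_iso_isolated φ.symm.toEquiv.toEmbedding (nice_cycleGraph hn) fun a b => ?_
    constructor
    · exact fun h => ⟨φ a, φ b, φ.symm_apply_apply a, φ.symm_apply_apply b, φ.map_adj_iff.2 h⟩
    · rintro ⟨x, y, rfl, rfl, h⟩
      exact φ.symm.map_adj_iff.2 h
  | zeroSum _ _ h ih1 ih2 => exact ih1.zeroSum ih2 h
  | oneSum _ _ h ih1 ih2 => exact ih1.oneSum ih2 h
  | addIsolated f _ h ih => exact ih.of_iso_isolated f h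

/-- The cut monoid of a ring graph is normal. -/
theorem ringGraph_cutNormal {V : Type} [Fintype V] (G : SimpleGraph V)
    (h : IsRingGraph G) : CutNormal G := by
  exact h.nice.cutNormal
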